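/- Suppose a ∈ L_T and that there exist p ∈ ℕ (p ≥ 1) and k ∈ [p²π²/T², (p+1)²π²/T²] such that k ≤ a(x) for a.e. x and ∫_0^T |a(x)| dx ≤ kT + 2(p+1)√k · cot(√k·T/(2(p+1))). Then the Hill equation u'' + a(x)u = 0 is stable: every solution u : ℝ → ℝ satisfies sup_{x ∈ ℝ} (|u(x)| + |u'(x)|) < ∞. -/

import Mathlib

open MeasureTheory Set Real

/-- Membership in `L_T`: measurable, `T`-periodic and integrable on `[0,T]`. -/
def MemLT (T : ℝ) (a : ℝ → ℝ) : Prop :=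
  Measurable a ∧ (∀ x, a (x + T) = a x) ∧ IntegrableOn a (Set.Icc 0 T)

/-! Put `ω = √k`. By Floquet theory, an unbounded solution yields a nontrivial solution with a real
multiplier. Its Prüfer angle `θ`, the polar angle of `(u', ω u)`, then turns by exactly `n π` over a
period, and `θ' = ω + (a - ω²) / ω · sin² θ` is at least `ω`. If `n ≤ p`, the turn is at most `ω T`,
which forces `a = ω²` almost everywhere. If `n ≥ p + 1`, integrate `θ'` against `1 / sin² θ`
truncated at height `1 / sin² B`, where `B = ω T / (2 (p + 1))`: this gives
`∫ (a - ω²) > 2 (p + 1) ω cot B`, against the hypothesis, unless `ω T = (p + 1) π`, in which case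
`cot B = 0` and the hypothesis itself forces `a = ω²`. But when `a = ω²`, conservation of energy
bounds every solution. -/

/-- `F` is a primitive of `f` in the sense of Carathéodory: it is absolutely continuous on every
compact interval and `F' = f` almost everywhere. -/
structure IsACPrimitive (F f : ℝ → ℝ) : Prop where
  absolutelyContinuousOnInterval : ∀ x y, AbsolutelyContinuousOnInterval F x y
  ae_hasDerivAt : ∀ᵐ x, HasDerivAt F (f x) x

theorem absolutelyContinuousOnInterval_comp_locallyLipschitz {E Y : Type*}
    [SeminormedAddCommGroup E] [PseudoMetricSpace Y] {F : ℝ → E} {G : E → Y} {x y : ℝ}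
    (hG : LocallyLipschitz G) (hF : AbsolutelyContinuousOnInterval F x y) :
    AbsolutelyContinuousOnInterval (fun t => G (F t)) x y := by
  have himage : IsCompact (F '' uIcc x y) := isCompact_uIcc.image_of_continuousOn hF.continuousOn
  obtain ⟨K, hK⟩ := hG.locallyLipschitzOn.exists_lipschitzOnWith_of_compact himage
  have hFK : Filter.Tendsto
      (fun I : ℕ × (ℕ → ℝ × ℝ) => K * ∑ i ∈ Finset.range I.1, dist (F (I.2 i).1) (F (I.2 i).2))
      (AbsolutelyContinuousOnInterval.totalLengthFilter ⊓
        Filter.principal (AbsolutelyContinuousOnInterval.disjWithin x y)) (nhds 0) := by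
    simpa only [mul_zero] using Filter.Tendsto.const_mul (K : ℝ) hF
  refine squeeze_zero' (.of_forall fun I => Finset.sum_nonneg fun i _ => dist_nonneg) ?_ hFK
  filter_upwards [Filter.mem_inf_of_right (Filter.mem_principal_self _)] with I hI
  rw [Finset.mul_sum]
  exact Finset.sum_le_sum fun i hi => hK.dist_le_mul _ (mem_image_of_mem F (hI.1 i hi).1) _
    (mem_image_of_mem F (hI.1 i hi).2)

theorem locallyIntegrable_of_forall_intervalIntegrable {q : ℝ → ℝ}
    (hq : ∀ x y, IntervalIntegrable q volume x y) : LocallyIntegrable q := fun x =>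
  ⟨Icc (x - 1) (x + 1), Icc_mem_nhds (by linarith) (by linarith),
    (intervalIntegrable_iff_integrableOn_Icc_of_le (by linarith)).1 (hq _ _)⟩

theorem contDiff_one_of_hasDerivAt {F f : ℝ → ℝ} (hF : ∀ x, HasDerivAt F (f x) x)
    (hf : Continuous f) : ContDiff ℝ 1 F := by
  rw [contDiff_one_iff_deriv, funext fun x => (hF x).deriv]
  exact ⟨fun x => (hF x).differentiableAt, hf⟩

theorem isACPrimitive_of_hasDerivAt {F f : ℝ → ℝ} (hF : ∀ x, HasDerivAt F (f x) x)
    (hf : Continuous f) : IsACPrimitive F f where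
  absolutelyContinuousOnInterval _ _ :=
    (contDiff_one_of_hasDerivAt hF hf).contDiffOn.absolutelyContinuousOnInterval
  ae_hasDerivAt := .of_forall hF

theorem isACPrimitive_integral {q : ℝ → ℝ} (hq : ∀ x y, IntervalIntegrable q volume x y) (c : ℝ) :
    IsACPrimitive (fun x => c + ∫ t in (0 : ℝ)..x, q t) q where
  absolutelyContinuousOnInterval x y := by
    have hsplit : (fun s => c + ∫ t in (0 : ℝ)..s, q t)
        = fun s => (c + ∫ t in (0 : ℝ)..x, q t) + ∫ t in x..s, q t := funext fun s => by
      rw [add_assoc, intervalIntegral.integral_add_adjacent_intervals (hq _ _) (hq _ _)]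
    rw [hsplit]
    exact contDiffOn_const.absolutelyContinuousOnInterval.fun_add
      ((hq x y).absolutelyContinuousOnInterval_intervalIntegral left_mem_uIcc)
  ae_hasDerivAt := by
    filter_upwards [LocallyIntegrable.ae_hasDerivAt_integral
      (locallyIntegrable_of_forall_intervalIntegrable hq)] with x hx
    exact (hx 0).const_add c

namespace IsACPrimitive

variable {F G f g : ℝ → ℝ}

theorem congr (hF : IsACPrimitive F f) (hfg : f =ᵐ[volume] g) : IsACPrimitive F g where
  absolutelyContinuousOnInterval := hF.absolutelyContinuousOnInterval
  ae_hasDerivAt := by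
    filter_upwards [hF.ae_hasDerivAt, hfg] with x hx hfgx
    rwa [← hfgx]

theorem continuous (hF : IsACPrimitive F f) : Continuous F := by
  refine continuous_iff_continuousAt.2 fun x => ?_
  have hx := (hF.absolutelyContinuousOnInterval (x - 1) (x + 1)).continuousOn
  rw [uIcc_of_le (by linarith)] at hx
  exact hx.continuousAt (Icc_mem_nhds (by linarith) (by linarith))

theorem intervalIntegrable (hF : IsACPrimitive F f) (x y : ℝ) :
    IntervalIntegrable f volume x y := by
  refine (hF.absolutelyContinuousOnInterval x y).intervalIntegrable_deriv.congr_ae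
    (ae_restrict_of_ae ?_)
  filter_upwards [hF.ae_hasDerivAt] with t ht using ht.deriv

theorem integral_eq_sub (hF : IsACPrimitive F f) (x y : ℝ) : ∫ t in x..y, f t = F y - F x := by
  rw [← (hF.absolutelyContinuousOnInterval x y).integral_deriv_eq_sub]
  refine intervalIntegral.integral_congr_ae ?_
  filter_upwards [hF.ae_hasDerivAt] with t ht _ using ht.deriv.symm

theorem add (hF : IsACPrimitive F f) (hG : IsACPrimitive G g) :
    IsACPrimitive (fun x => F x + G x) (fun x => f x + g x) where
  absolutelyContinuousOnInterval x y :=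
    (hF.absolutelyContinuousOnInterval x y).fun_add (hG.absolutelyContinuousOnInterval x y)
  ae_hasDerivAt := by
    filter_upwards [hF.ae_hasDerivAt, hG.ae_hasDerivAt] with x hFx hGx using hFx.fun_add hGx

theorem mul (hF : IsACPrimitive F f) (hG : IsACPrimitive G g) :
    IsACPrimitive (fun x => F x * G x) (fun x => f x * G x + F x * g x) where
  absolutelyContinuousOnInterval x y :=
    (hF.absolutelyContinuousOnInterval x y).fun_mul (hG.absolutelyContinuousOnInterval x y)
  ae_hasDerivAt := by
    filter_upwards [hF.ae_hasDerivAt, hG.ae_hasDerivAt] with x hFx hGx using hFx.fun_mul hGx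

theorem comp (hG : ∀ x, HasDerivAt G (g x) x) (hg : Continuous g) (hF : IsACPrimitive F f) :
    IsACPrimitive (fun x => G (F x)) (fun x => g (F x) * f x) where
  absolutelyContinuousOnInterval x y :=
    absolutelyContinuousOnInterval_comp_locallyLipschitz
      (contDiff_one_of_hasDerivAt hG hg).locallyLipschitz (hF.absolutelyContinuousOnInterval x y)
  ae_hasDerivAt := by
    filter_upwards [hF.ae_hasDerivAt] with x hx using (hG (F x)).comp x hx

theorem const_mul (c : ℝ) (hF : IsACPrimitive F f) :
    IsACPrimitive (fun x => c * F x) (fun x => c * f x) :=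
  hF.comp (fun x => by simpa using (hasDerivAt_id x).const_mul c) continuous_const

theorem sub (hF : IsACPrimitive F f) (hG : IsACPrimitive G g) :
    IsACPrimitive (fun x => F x - G x) (fun x => f x - g x) := by
  simpa only [neg_one_mul, ← sub_eq_add_neg] using hF.add (hG.const_mul (-1))

theorem monotone (hF : IsACPrimitive F f) (hf : ∀ᵐ x, 0 ≤ f x) : Monotone F := fun x y hxy => by
  rw [← sub_nonneg, ← hF.integral_eq_sub]
  exact intervalIntegral.integral_nonneg_of_ae hxy hf

theorem antitone (hF : IsACPrimitive F f) (hf : ∀ᵐ x, f x ≤ 0) : Antitone F := fun x y hxy => by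
  have := (hF.const_mul (-1)).monotone (by filter_upwards [hf] with x hx; linarith) hxy
  linarith

theorem eq_of_ae_eq_zero (hF : IsACPrimitive F f) (hf : ∀ᵐ x, f x = 0) (x y : ℝ) : F x = F y := by
  rw [eq_comm, ← sub_eq_zero, ← hF.integral_eq_sub,
    intervalIntegral.integral_zero_ae (hf.mono fun t ht _ => ht)]

theorem integral_comp_mul (hF : IsACPrimitive F f) (hg : Continuous g) (x y : ℝ) :
    ∫ t in x..y, g (F t) * f t = ∫ s in F x..F y, g s := by
  have hgI (x y : ℝ) : IntervalIntegrable g volume x y := hg.intervalIntegrable x y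
  have hG (s : ℝ) : HasDerivAt (fun s => ∫ r in (0 : ℝ)..s, g r) (g s) s :=
    intervalIntegral.integral_hasDerivAt_right (hgI 0 s) (hg.stronglyMeasurableAtFilter _ _)
      hg.continuousAt
  rw [(hF.comp hG hg).integral_eq_sub,
    intervalIntegral.integral_interval_sub_left (hgI _ _) (hgI _ _)]

theorem eq_zero_of_abs_le_mul {κ : ℝ → ℝ} (hF : IsACPrimitive F f)
    (hκ : ∀ x y, IntervalIntegrable κ volume x y) (hle : ∀ᵐ x, |f x| ≤ κ x * |F x|) {x₀ : ℝ}
    (hx₀ : F x₀ = 0) (x : ℝ) : F x = 0 := by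
  have hK := isACPrimitive_integral hκ 0
  set K : ℝ → ℝ := fun x => 0 + ∫ t in (0 : ℝ)..x, κ t
  have hweight (c : ℝ) : IsACPrimitive (fun x => F x * F x * exp (c * K x))
      (fun x => (2 * (f x * F x) + c * κ x * F x ^ 2) * exp (c * K x)) :=
    ((hF.mul hF).mul ((hK.const_mul c).comp hasDerivAt_exp continuous_exp)).congr
      (.of_forall fun x => by ring)
  have hfF : ∀ᵐ x, |f x * F x| ≤ κ x * F x ^ 2 := by
    filter_upwards [hle] with x hx
    rw [abs_mul, ← sq_abs (F x), sq, ← mul_assoc]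
    gcongr
  have hanti : Antitone fun x => F x * F x * exp (-2 * K x) := (hweight _).antitone <| by
    filter_upwards [hfF] with x hx
    exact mul_nonpos_of_nonpos_of_nonneg (by linarith [le_abs_self (f x * F x)]) (exp_pos _).le
  have hmono : Monotone fun x => F x * F x * exp (2 * K x) := (hweight _).monotone <| by
    filter_upwards [hfF] with x hx
    exact mul_nonneg (by linarith [neg_abs_le (f x * F x)]) (exp_pos _).le
  have hzero {c : ℝ} (hc : F x * F x * exp (c * K x) ≤ F x₀ * F x₀ * exp (c * K x₀)) :
      F x = 0 := by
    rw [hx₀, zero_mul, zero_mul] at hc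
    exact mul_self_eq_zero.1 ((nonpos_of_mul_nonpos_left hc (exp_pos _)).antisymm
      (mul_self_nonneg _))
  rcases le_total x₀ x with hx | hx
  · exact hzero (hanti hx)
  · exact hzero (hmono hx)

end IsACPrimitive

/-- `u` is a Carathéodory solution of the Hill equation `u'' + a u = 0`, with derivative `v`. -/
structure IsHillSolution (a u v : ℝ → ℝ) : Prop where
  hasDerivAt : ∀ x, HasDerivAt u (v x) x
  isACPrimitive_deriv : IsACPrimitive v fun x => -(a x * u x)

namespace IsHillSolution

variable {a u v y w : ℝ → ℝ}

theorem isACPrimitive (h : IsHillSolution a u v) : IsACPrimitive u v :=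
  isACPrimitive_of_hasDerivAt h.hasDerivAt h.isACPrimitive_deriv.continuous

theorem of_integral_eq (ha : ∀ x y, IntervalIntegrable a volume x y)
    (hu : ∀ x, HasDerivAt u (v x) x) {c : ℝ} (hv : ∀ x, v x = c - ∫ t in (0 : ℝ)..x, a t * u t) :
    IsHillSolution a u v where
  hasDerivAt := hu
  isACPrimitive_deriv := by
    have hcont : Continuous u := continuous_iff_continuousAt.2 fun x => (hu x).continuousAt
    have hv' : v = fun x => c + ∫ t in (0 : ℝ)..x, -(a t * u t) := funext fun x => by
      rw [hv, intervalIntegral.integral_neg, sub_eq_add_neg]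
    rw [hv']
    exact isACPrimitive_integral
      (fun x y => ((ha x y).mul_continuousOn hcont.continuousOn).neg) c

theorem mul_add_mul (hu : IsHillSolution a u v) (hy : IsHillSolution a y w) (α β : ℝ) :
    IsHillSolution a (fun x => α * u x + β * y x) (fun x => α * v x + β * w x) where
  hasDerivAt x := ((hu.hasDerivAt x).const_mul α).add ((hy.hasDerivAt x).const_mul β)
  isACPrimitive_deriv :=
    ((hu.isACPrimitive_deriv.const_mul α).add (hy.isACPrimitive_deriv.const_mul β)).congr
      (.of_forall fun x => by ring)

theorem translate (ha : ∀ x y, IntervalIntegrable a volume x y) (h : IsHillSolution a u v) {T : ℝ}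
    (hper : Function.Periodic a T) :
    IsHillSolution a (fun x => u (x + T)) (fun x => v (x + T)) := by
  refine of_integral_eq ha (c := v T) (fun x => (h.hasDerivAt (x + T)).comp_add_const x T)
    fun x => ?_
  have hshift : ∫ t in (0 : ℝ)..x, a t * u (t + T) = ∫ t in T..x + T, a t * u t := by
    simpa only [hper _, zero_add] using
      intervalIntegral.integral_comp_add_right (a := 0) (b := x) (fun t => a t * u t) T
  have hv := h.isACPrimitive_deriv.integral_eq_sub T (x + T)
  rw [intervalIntegral.integral_neg] at hv
  linarith

theorem wronskian_eq (hu : IsHillSolution a u v) (hy : IsHillSolution a y w) (s t : ℝ) :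
    u s * w s - y s * v s = u t * w t - y t * v t :=
  ((hu.isACPrimitive.mul hy.isACPrimitive_deriv).sub
    (hy.isACPrimitive.mul hu.isACPrimitive_deriv)).eq_of_ae_eq_zero
      (.of_forall fun x => by ring) s t

theorem eq_zero_of_eq_zero (ha : ∀ x y, IntervalIntegrable a volume x y)
    (h : IsHillSolution a u v) {x₀ : ℝ} (hu : u x₀ = 0) (hv : v x₀ = 0) (x : ℝ) :
    u x = 0 ∧ v x = 0 := by
  have hnorm := (h.isACPrimitive.mul h.isACPrimitive).add
    (h.isACPrimitive_deriv.mul h.isACPrimitive_deriv)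
  refine mul_self_add_mul_self_eq_zero.1 <| hnorm.eq_zero_of_abs_le_mul (κ := fun t => |1 - a t|)
    (fun x y => (intervalIntegrable_const.sub (ha x y)).abs) (.of_forall fun t => ?_)
    (by rw [hu, hv, mul_zero, add_zero]) x
  rw [abs_of_nonneg (add_nonneg (mul_self_nonneg (u t)) (mul_self_nonneg (v t)))]
  calc |v t * u t + u t * v t + (-(a t * u t) * v t + v t * -(a t * u t))|
      = |1 - a t| * |2 * u t * v t| := by rw [← abs_mul]; ring_nf
    _ ≤ |1 - a t| * (u t * u t + v t * v t) := by
        gcongr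
        exact abs_le.2 ⟨by nlinarith [sq_nonneg (u t + v t)], by nlinarith [sq_nonneg (u t - v t)]⟩

theorem ne_zero_or_ne_zero (ha : ∀ x y, IntervalIntegrable a volume x y)
    (h : IsHillSolution a u v) {x₀ : ℝ} (h₀ : u x₀ ≠ 0 ∨ v x₀ ≠ 0) (x : ℝ) :
    u x ≠ 0 ∨ v x ≠ 0 := by
  by_contra! hx
  have := h.eq_zero_of_eq_zero ha hx.1 hx.2 x₀
  tauto

theorem energy_eq {ω : ℝ} (ha : ∀ᵐ x, a x = ω ^ 2) (h : IsHillSolution a u v) (s t : ℝ) :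
    v s ^ 2 + ω ^ 2 * u s ^ 2 = v t ^ 2 + ω ^ 2 * u t ^ 2 := by
  simp only [sq (u _), sq (v _)]
  refine ((h.isACPrimitive_deriv.mul h.isACPrimitive_deriv).add
    ((h.isACPrimitive.mul h.isACPrimitive).const_mul (ω ^ 2))).eq_of_ae_eq_zero ?_ s t
  filter_upwards [ha] with x hx
  rw [hx]
  ring

theorem bounded_of_ae_eq_sq {ω : ℝ} (hω : 0 < ω) (ha : ∀ᵐ x, a x = ω ^ 2)
    (h : IsHillSolution a u v) : ∃ C, ∀ x, |u x| + |v x| ≤ C := by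
  set E := v 0 ^ 2 + ω ^ 2 * u 0 ^ 2
  refine ⟨√(E / ω ^ 2) + √E, fun x => ?_⟩
  have hE := h.energy_eq ha x 0
  gcongr
  · refine abs_le_sqrt ?_
    rw [le_div_iff₀' (by positivity)]
    linarith [sq_nonneg (v x)]
  · exact abs_le_sqrt (by linarith [mul_nonneg (sq_nonneg ω) (sq_nonneg (u x))])

end IsHillSolution

/-- `u` is a nontrivial solution of `u'' + a u = 0` whose states `(u, u')` at `0` and at `T` are
collinear. For `T`-periodic `a` these are the Floquet solutions with a real multiplier, and
collinearity avoids naming the multiplier. -/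
structure IsFloquetSolution (a : ℝ → ℝ) (T : ℝ) (u v : ℝ → ℝ) : Prop
    extends IsHillSolution a u v where
  nontrivial : u 0 ≠ 0 ∨ v 0 ≠ 0
  collinear : u 0 * v T = u T * v 0

theorem bounded_of_recurrence {f : ℝ → ℝ} (hf : Continuous f) {T β : ℝ} (hT : T ≠ 0)
    (hβ : β ^ 2 < 4) (hrec : ∀ x, f (x + T + T) = β * f (x + T) - f x) :
    ∃ C, ∀ x, |f x| ≤ C := by
  set Q : ℝ → ℝ := fun x => f x ^ 2 - β * (f x * f (x + T)) + f (x + T) ^ 2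
  have hQper : Function.Periodic Q T := fun x => by
    simp only [Q, hrec]
    ring
  obtain ⟨C, hC⟩ := (hQper.isBounded_of_continuous hT (by fun_prop)).exists_norm_le
  refine ⟨√(C / (1 - β ^ 2 / 4)), fun x => abs_le_sqrt ?_⟩
  rw [le_div_iff₀ (by linarith)]
  calc f x ^ 2 * (1 - β ^ 2 / 4) ≤ f x ^ 2 * (1 - β ^ 2 / 4) + (f (x + T) - β / 2 * f x) ^ 2 :=
        le_add_of_nonneg_right (sq_nonneg _)
    _ = Q x := by ring
    _ ≤ C := (le_abs_self _).trans (hC _ ⟨x, rfl⟩)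

namespace IsHillSolution

variable {a u v : ℝ → ℝ} {T : ℝ}

-- Cayley–Hamilton for the monodromy matrix, whose determinant is `1` by the Wronskian identity.
theorem exists_recurrence (ha : ∀ x y, IntervalIntegrable a volume x y)
    (h : IsHillSolution a u v) (hper : Function.Periodic a T) (hW : u 0 * v T - u T * v 0 ≠ 0) :
    ∃ β, ∀ x, u (x + T + T) = β * u (x + T) - u x ∧ v (x + T + T) = β * v (x + T) - v x := by
  have h₁ := h.translate ha hper
  have h₂ := h₁.translate ha hper
  have hWT : u T * v (T + T) - u (T + T) * v T = u 0 * v T - u T * v 0 := by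
    simpa only [zero_add] using h.wronskian_eq h₁ T 0
  set W := u 0 * v T - u T * v 0 with hWdef
  obtain ⟨β, hβ⟩ : ∃ β, β * W = u 0 * v (T + T) - u (T + T) * v 0 :=
    ⟨_, div_mul_cancel₀ _ hW⟩
  have hu : u (T + T) = β * u T - u 0 := mul_left_cancel₀ hW <| by
    rw [hWdef] at hβ ⊢
    linear_combination (-u T) * hβ - u 0 * hWT
  have hv : v (T + T) = β * v T - v 0 := mul_left_cancel₀ hW <| by
    rw [hWdef] at hβ ⊢
    linear_combination (-v T) * hβ - v 0 * hWT
  refine ⟨β, fun x => ?_⟩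
  have hzero := ((h₂.mul_add_mul h₁ 1 (-β)).mul_add_mul h 1 1).eq_zero_of_eq_zero ha (x₀ := 0)
    (by simp only [zero_add]; linarith) (by simp only [zero_add]; linarith) x
  exact ⟨by linarith [hzero.1], by linarith [hzero.2]⟩

theorem exists_isFloquetSolution_of_recurrence (ha : ∀ x y, IntervalIntegrable a volume x y)
    (h : IsHillSolution a u v) (hper : Function.Periodic a T) (hW : u 0 * v T - u T * v 0 ≠ 0)
    {β : ℝ} (hβ : 4 ≤ β ^ 2)
    (hrec : ∀ x, u (x + T + T) = β * u (x + T) - u x ∧ v (x + T + T) = β * v (x + T) - v x) :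
    ∃ y w, IsFloquetSolution a T y w := by
  obtain ⟨μ, hμ⟩ : ∃ μ : ℝ, μ ^ 2 - β * μ + 1 = 0 :=
    ⟨(β + √(β ^ 2 - 4)) / 2, by linear_combination sq_sqrt (sub_nonneg.2 hβ) / 4⟩
  obtain ⟨hu, hv⟩ := hrec 0
  -- `u (· + T) - μ u` has multiplier `β - μ = μ⁻¹`.
  refine ⟨_, _, (h.translate ha hper).mul_add_mul h 1 (-μ), ?_, ?_⟩
  · by_contra! h₀
    refine hW ?_
    linear_combination (norm := (simp only [zero_add]; ring)) u 0 * h₀.2 - v 0 * h₀.1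
  · simp only [zero_add] at hu hv ⊢
    rw [hu, hv]
    linear_combination (u 0 * v T - u T * v 0) * hμ

theorem bounded_or_exists_isFloquetSolution (ha : ∀ x y, IntervalIntegrable a volume x y)
    (h : IsHillSolution a u v) (hT : T ≠ 0) (hper : Function.Periodic a T) :
    (∃ C, ∀ x, |u x| + |v x| ≤ C) ∨ ∃ y w, IsFloquetSolution a T y w := by
  by_cases h₀ : u 0 = 0 ∧ v 0 = 0
  · refine .inl ⟨0, fun x => ?_⟩
    obtain ⟨hu, hv⟩ := h.eq_zero_of_eq_zero ha h₀.1 h₀.2 x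
    rw [hu, hv, abs_zero, add_zero]
  by_cases hW : u 0 * v T - u T * v 0 = 0
  · exact .inr ⟨u, v, h, not_and_or.1 h₀, sub_eq_zero.1 hW⟩
  obtain ⟨β, hrec⟩ := h.exists_recurrence ha hper hW
  rcases lt_or_ge (β ^ 2) 4 with hβ | hβ
  · obtain ⟨C₁, hC₁⟩ := bounded_of_recurrence h.isACPrimitive.continuous hT hβ fun x => (hrec x).1
    obtain ⟨C₂, hC₂⟩ :=
      bounded_of_recurrence h.isACPrimitive_deriv.continuous hT hβ fun x => (hrec x).2
    exact .inl ⟨C₁ + C₂, fun x => add_le_add (hC₁ x) (hC₂ x)⟩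
  · exact .inr (h.exists_isFloquetSolution_of_recurrence ha hper hW hβ hrec)

end IsHillSolution

/-- `θ` solves the Prüfer equation `θ' = ω + (a - ω²) / ω · sin² θ`, which governs the polar angle
of `(u', ω u)` along a solution of `u'' + a u = 0`. -/
def IsPruferAngle (a : ℝ → ℝ) (ω : ℝ) (θ : ℝ → ℝ) : Prop :=
  IsACPrimitive θ fun x => ω + (a x - ω ^ 2) / ω * sin (θ x) ^ 2

/-- The angular velocity of `(v, ω u)`, written without reference to the angle so that an angle is
obtained from it by integration. -/
noncomputable def pruferSpeed (a u v : ℝ → ℝ) (ω x : ℝ) : ℝ :=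
  ω + (a x - ω ^ 2) / ω * ((ω * u x) ^ 2 / (v x ^ 2 + (ω * u x) ^ 2))

theorem sin_sq_eq_of_mul_cos_eq_mul_sin {X Y t : ℝ} (h : X * cos t = Y * sin t)
    (hXY : Y ^ 2 + X ^ 2 ≠ 0) : sin t ^ 2 = X ^ 2 / (Y ^ 2 + X ^ 2) := by
  rw [eq_div_iff hXY]
  linear_combination X ^ 2 * sin_sq_add_cos_sq t - (X * cos t + Y * sin t) * h

theorem exists_mul_cos_eq_mul_sin (X Y : ℝ) : ∃ t, X * cos t = Y * sin t := by
  refine ⟨Complex.arg ⟨Y, X⟩, ?_⟩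
  have hcos : ‖(⟨Y, X⟩ : ℂ)‖ * cos (Complex.arg ⟨Y, X⟩) = Y := Complex.norm_mul_cos_arg ⟨Y, X⟩
  have hsin : ‖(⟨Y, X⟩ : ℂ)‖ * sin (Complex.arg ⟨Y, X⟩) = X := Complex.norm_mul_sin_arg ⟨Y, X⟩
  linear_combination (-cos (Complex.arg ⟨Y, X⟩)) * hsin + sin (Complex.arg ⟨Y, X⟩) * hcos

theorem sin_sub_eq_zero_of_collinear {X Y X' Y' t t' : ℝ} (h : X * cos t = Y * sin t)
    (h' : X' * cos t' = Y' * sin t') (hXY : 0 < Y ^ 2 + X ^ 2) (hXY' : 0 < Y' ^ 2 + X' ^ 2)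
    (hcol : X * Y' = X' * Y) : sin (t' - t) = 0 := by
  have hdot : (Y * Y' + X * X') ^ 2 = (Y ^ 2 + X ^ 2) * (Y' ^ 2 + X' ^ 2) := by
    linear_combination (-(X * Y' - X' * Y)) * hcol
  have hdot₀ : Y * Y' + X * X' ≠ 0 := by
    rw [← sq_pos_iff, hdot]
    positivity
  refine (mul_eq_zero.1 ?_).resolve_left hdot₀
  rw [sin_sub]
  linear_combination (Y' * cos t' + X' * sin t') * h - (Y * cos t + X * sin t) * h' -
    (cos t * cos t' + sin t * sin t') * hcol

namespace IsHillSolution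

variable {a u v θ : ℝ → ℝ} {ω : ℝ}

theorem amplitude_sq_pos (ha : ∀ x y, IntervalIntegrable a volume x y) (h : IsHillSolution a u v)
    (hω : 0 < ω) (h₀ : u 0 ≠ 0 ∨ v 0 ≠ 0) (x : ℝ) : 0 < v x ^ 2 + (ω * u x) ^ 2 := by
  rcases h.ne_zero_or_ne_zero ha h₀ x with hu | hv <;> positivity

theorem intervalIntegrable_sub_mul_div (ha : ∀ x y, IntervalIntegrable a volume x y)
    (h : IsHillSolution a u v) (hω : 0 < ω) (h₀ : u 0 ≠ 0 ∨ v 0 ≠ 0) {g : ℝ → ℝ}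
    (hg : Continuous g) (x y : ℝ) :
    IntervalIntegrable (fun t => (a t - ω ^ 2) / ω * (g t / (v t ^ 2 + (ω * u t) ^ 2)))
      volume x y := by
  have hu := h.isACPrimitive.continuous
  have hv := h.isACPrimitive_deriv.continuous
  have hcont : Continuous fun t => g t / (v t ^ 2 + (ω * u t) ^ 2) :=
    hg.div₀ (by fun_prop) fun t => (h.amplitude_sq_pos ha hω h₀ t).ne'
  exact (((ha x y).sub intervalIntegrable_const).div_const ω).mul_continuousOn hcont.continuousOn

theorem mul_cos_eq_mul_sin (ha : ∀ x y, IntervalIntegrable a volume x y) (h : IsHillSolution a u v)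
    (hω : 0 < ω) (h₀ : u 0 ≠ 0 ∨ v 0 ≠ 0) (hθ : IsACPrimitive θ (pruferSpeed a u v ω))
    (hinit : ω * u 0 * cos (θ 0) = v 0 * sin (θ 0)) (x : ℝ) :
    ω * u x * cos (θ x) = v x * sin (θ x) := by
  have hu : Continuous u := h.isACPrimitive.continuous
  have hv : Continuous v := h.isACPrimitive_deriv.continuous
  have hdefect : IsACPrimitive (fun t => ω * u t * cos (θ t) - v t * sin (θ t)) fun t =>
      -((a t - ω ^ 2) / ω * (ω * u t * v t / (v t ^ 2 + (ω * u t) ^ 2))) *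
        (ω * u t * cos (θ t) - v t * sin (θ t)) := by
    refine (((h.isACPrimitive.const_mul ω).mul (hθ.comp hasDerivAt_cos (by fun_prop))).sub
      (h.isACPrimitive_deriv.mul (hθ.comp hasDerivAt_sin continuous_cos))).congr
        (.of_forall fun t => ?_)
    have hr := (h.amplitude_sq_pos ha hω h₀ t).ne'
    simp only [pruferSpeed, mul_pow] at hr ⊢
    field_simp
    ring
  exact sub_eq_zero.1 <| hdefect.eq_zero_of_abs_le_mul
    (fun x y => (h.intervalIntegrable_sub_mul_div ha hω h₀ (g := fun t => ω * u t * v t)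
      (by fun_prop) x y).abs)
    (.of_forall fun t => by rw [abs_mul, abs_neg]) (sub_eq_zero.2 hinit) x

theorem exists_isPruferAngle (ha : ∀ x y, IntervalIntegrable a volume x y)
    (h : IsHillSolution a u v) (hω : 0 < ω) (h₀ : u 0 ≠ 0 ∨ v 0 ≠ 0) :
    ∃ θ, IsPruferAngle a ω θ ∧ ∀ x, ω * u x * cos (θ x) = v x * sin (θ x) := by
  obtain ⟨θ₀, hθ₀⟩ := exists_mul_cos_eq_mul_sin (ω * u 0) (v 0)
  have hu : Continuous u := h.isACPrimitive.continuous
  have hθ := isACPrimitive_integral (q := pruferSpeed a u v ω) (fun x y =>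
    intervalIntegrable_const.add (h.intervalIntegrable_sub_mul_div ha hω h₀
      (g := fun t => (ω * u t) ^ 2) (by fun_prop) x y)) θ₀
  have halign := h.mul_cos_eq_mul_sin ha hω h₀ hθ
    (by simpa only [intervalIntegral.integral_same, add_zero] using hθ₀)
  refine ⟨_, hθ.congr (.of_forall fun x => ?_), halign⟩
  simp only [sin_sq_eq_of_mul_cos_eq_mul_sin (halign x) (h.amplitude_sq_pos ha hω h₀ x).ne']
  rw [pruferSpeed]

end IsHillSolution

theorem IsFloquetSolution.exists_isPruferAngle {a u v : ℝ → ℝ} {T ω : ℝ}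
    (ha : ∀ x y, IntervalIntegrable a volume x y) (h : IsFloquetSolution a T u v) (hω : 0 < ω) :
    ∃ θ, IsPruferAngle a ω θ ∧ ∃ n : ℤ, n * π = θ T - θ 0 := by
  obtain ⟨θ, hθ, halign⟩ := h.toIsHillSolution.exists_isPruferAngle ha hω h.nontrivial
  refine ⟨θ, hθ, sin_eq_zero_iff.1 <| sin_sub_eq_zero_of_collinear (halign 0) (halign T)
    (h.amplitude_sq_pos ha hω h.nontrivial 0) (h.amplitude_sq_pos ha hω h.nontrivial T) ?_⟩
  rw [mul_assoc, mul_assoc, h.collinear]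

theorem ae_restrict_eq_zero_of_integral_nonpos {f : ℝ → ℝ} {x y : ℝ} (hxy : x ≤ y)
    (hf : IntervalIntegrable f volume x y) (hf₀ : ∀ᵐ t, 0 ≤ f t) (hint : ∫ t in x..y, f t ≤ 0) :
    ∀ᵐ t ∂volume.restrict (Ioc x y), f t = 0 :=
  (intervalIntegral.integral_eq_zero_iff_of_le_of_nonneg_ae hxy (ae_restrict_of_ae hf₀) hf).1
    (hint.antisymm (intervalIntegral.integral_nonneg_of_ae hxy hf₀))

namespace IsPruferAngle

variable {a θ h : ℝ → ℝ} {ω x y : ℝ}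

theorem isACPrimitive_sub_mul (hθ : IsPruferAngle a ω θ) :
    IsACPrimitive (fun x => θ x - ω * x) fun x => (a x - ω ^ 2) / ω * sin (θ x) ^ 2 :=
  (hθ.sub ((isACPrimitive_of_hasDerivAt hasDerivAt_id continuous_const).const_mul ω)).congr
    (.of_forall fun x => by ring)

theorem ae_deriv_sub_mul_nonneg (hω : 0 < ω) (ha : ∀ᵐ x, ω ^ 2 ≤ a x) :
    ∀ᵐ x, 0 ≤ (a x - ω ^ 2) / ω * sin (θ x) ^ 2 := by
  filter_upwards [ha] with x hx
  exact mul_nonneg (div_nonneg (sub_nonneg.2 hx) hω.le) (sq_nonneg _)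

theorem mul_sub_le (hθ : IsPruferAngle a ω θ) (hω : 0 < ω) (ha : ∀ᵐ x, ω ^ 2 ≤ a x)
    (hxy : x ≤ y) : ω * (y - x) ≤ θ y - θ x := by
  have := hθ.isACPrimitive_sub_mul.monotone (ae_deriv_sub_mul_nonneg hω ha) hxy
  linarith

theorem strictMono (hθ : IsPruferAngle a ω θ) (hω : 0 < ω) (ha : ∀ᵐ x, ω ^ 2 ≤ a x) :
    StrictMono θ := fun x y hxy => by
  linarith [hθ.mul_sub_le hω ha hxy.le, mul_pos hω (sub_pos.2 hxy)]

theorem ae_sin_ne_zero (hθ : IsPruferAngle a ω θ) (hω : 0 < ω) (ha : ∀ᵐ x, ω ^ 2 ≤ a x) :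
    ∀ᵐ x, sin (θ x) ≠ 0 := by
  have hzeros : (θ ⁻¹' range fun n : ℤ => (n : ℝ) * π).Countable :=
    (countable_range _).preimage (hθ.strictMono hω ha).injective
  filter_upwards [hzeros.ae_notMem volume] with x hx hsin
  exact hx (sin_eq_zero_iff.1 hsin)

theorem ae_eq_sq_of_sub_le (hθ : IsPruferAngle a ω θ) (hω : 0 < ω) (ha : ∀ᵐ x, ω ^ 2 ≤ a x)
    (hxy : x ≤ y) (hle : θ y - θ x ≤ ω * (y - x)) :
    ∀ᵐ t ∂volume.restrict (Ioc x y), a t = ω ^ 2 := by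
  have hφ := hθ.isACPrimitive_sub_mul
  have hzero := ae_restrict_eq_zero_of_integral_nonpos hxy (hφ.intervalIntegrable x y)
    (ae_deriv_sub_mul_nonneg hω ha) (by rw [hφ.integral_eq_sub]; linarith)
  filter_upwards [hzero, ae_restrict_of_ae (hθ.ae_sin_ne_zero hω ha)] with t ht hsin
  rw [mul_eq_zero_iff_right (pow_ne_zero 2 hsin), div_eq_zero_iff, or_iff_left hω.ne',
    sub_eq_zero] at ht
  exact ht

theorem mul_integral_le (hθ : IsPruferAngle a ω θ) (hω : 0 < ω) (ha : ∀ᵐ x, ω ^ 2 ≤ a x)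
    (haI : IntervalIntegrable a volume x y) (hxy : x ≤ y) (hh : Continuous h)
    (hsin : ∀ t, h t * sin t ^ 2 ≤ 1) :
    ω * ∫ s in θ x..θ y, h s ≤ (∫ t in x..y, (a t - ω ^ 2)) + ω ^ 2 * ∫ t in x..y, h (θ t) := by
  have hθc : Continuous θ := IsACPrimitive.continuous hθ
  have hhθI : IntervalIntegrable (fun t => h (θ t)) volume x y :=
    (hh.comp hθc).intervalIntegrable x y
  have haI' : IntervalIntegrable (fun t => a t - ω ^ 2) volume x y :=
    haI.sub intervalIntegrable_const
  have hθI := (IsACPrimitive.intervalIntegrable hθ x y).continuousOn_mul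
    (hh.comp hθc).continuousOn
  rw [← IsACPrimitive.integral_comp_mul hθ hh, ← intervalIntegral.integral_const_mul,
    ← intervalIntegral.integral_const_mul,
    ← intervalIntegral.integral_add haI' (hhθI.const_mul _)]
  refine intervalIntegral.integral_mono_ae hxy (hθI.const_mul ω) (haI'.add (hhθI.const_mul _)) ?_
  filter_upwards [ha] with t ht
  calc ω * (h (θ t) * (ω + (a t - ω ^ 2) / ω * sin (θ t) ^ 2))
      = (a t - ω ^ 2) * (h (θ t) * sin (θ t) ^ 2) + ω ^ 2 * h (θ t) := by field_simp; ring
    _ ≤ (a t - ω ^ 2) + ω ^ 2 * h (θ t) := by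
        gcongr
        exact mul_le_of_le_one_right (sub_nonneg.2 ht) (hsin _)

end IsPruferAngle

/-- The function `1 / sin²` truncated at the height `1 / sin² B`, which makes it continuous at the
zeros of `sin`. It is the weight against which the Prüfer equation is integrated. -/
noncomputable def truncCscSq (B t : ℝ) : ℝ := 1 / max (sin t ^ 2) (sin B ^ 2)

section TruncCscSq

variable {B t : ℝ}

theorem continuous_truncCscSq (hB : sin B ≠ 0) : Continuous (truncCscSq B) :=
  continuous_const.div₀ (by fun_prop) fun _ => (lt_max_of_lt_right (by positivity)).ne'

theorem truncCscSq_nonneg : 0 ≤ truncCscSq B t :=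
  one_div_nonneg.2 (le_max_of_le_left (sq_nonneg _))

theorem sin_sq_periodic : Function.Periodic (fun t => sin t ^ 2) π := fun t => by
  simp only [sin_add_pi, neg_sq]

theorem truncCscSq_periodic : Function.Periodic (truncCscSq B) π :=
  sin_sq_periodic.comp fun r => 1 / max r (sin B ^ 2)

theorem truncCscSq_mul_sin_sq_le_one : truncCscSq B t * sin t ^ 2 ≤ 1 := by
  rw [truncCscSq, one_div_mul_eq_div]
  exact div_le_one_of_le₀ (le_max_left _ _) (le_max_of_le_left (sq_nonneg _))

theorem truncCscSq_le (hB : sin B ≠ 0) : truncCscSq B t ≤ 1 / sin B ^ 2 :=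
  one_div_le_one_div_of_le (by positivity) (le_max_right _ _)

theorem truncCscSq_lt (hB : sin B ≠ 0) (ht : sin B ^ 2 < sin t ^ 2) :
    truncCscSq B t < 1 / sin B ^ 2 :=
  one_div_lt_one_div_of_lt (by positivity) (lt_max_of_lt_left ht)

theorem integral_truncCscSq_neg_self (hB : 0 < B) (hB' : B < π / 2) :
    ∫ t in -B..B, truncCscSq B t = 2 * B / sin B ^ 2 := by
  have hconst : EqOn (truncCscSq B) (fun _ => 1 / sin B ^ 2) (uIcc (-B) B) := fun t ht => by
    rw [uIcc_of_le (by linarith)] at ht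
    have hle : sin t ≤ sin B := sin_le_sin_of_le_of_le_pi_div_two (by linarith [ht.1]) hB'.le ht.2
    have hge : -sin B ≤ sin t := by
      rw [← sin_neg]
      exact sin_le_sin_of_le_of_le_pi_div_two (by linarith) (by linarith [ht.2]) ht.1
    rw [truncCscSq, max_eq_right (sq_le_sq' hge hle)]
  rw [intervalIntegral.integral_congr hconst, intervalIntegral.integral_const, smul_eq_mul]
  ring

theorem integral_truncCscSq_pi_sub (hB : 0 < B) (hB' : B < π / 2) :
    ∫ t in B..π - B, truncCscSq B t = 2 * cot B := by
  have hsinB : 0 < sin B := sin_pos_of_pos_of_lt_pi hB (by linarith)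
  have hderiv : ∀ t ∈ uIcc B (π - B),
      HasDerivAt (fun t => -(cos t / sin t)) (truncCscSq B t) t := fun t ht => by
    rw [uIcc_of_le (by linarith)] at ht
    have hle : sin B ≤ sin t := by
      rw [← cos_pi_div_two_sub, ← cos_pi_div_two_sub t, ← cos_abs (π / 2 - t)]
      exact cos_le_cos_of_nonneg_of_le_pi (abs_nonneg _) (by linarith)
        (abs_le.2 ⟨by linarith [ht.2], by linarith [ht.1]⟩)
    have ht₀ : sin t ≠ 0 := (hsinB.trans_le hle).ne'
    refine ((hasDerivAt_cos t).fun_div (hasDerivAt_sin t) ht₀).fun_neg.congr_deriv ?_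
    rw [truncCscSq, max_eq_left (pow_le_pow_left₀ hsinB.le hle 2), ← neg_div]
    congr 1
    linear_combination sin_sq_add_cos_sq t
  rw [intervalIntegral.integral_eq_sub_of_hasDerivAt hderiv
    ((continuous_truncCscSq hsinB.ne').intervalIntegrable _ _), cos_pi_sub, sin_pi_sub,
    cot_eq_cos_div_sin]
  ring

theorem integral_truncCscSq_period (hB : 0 < B) (hB' : B < π / 2) :
    ∫ t in (0 : ℝ)..π, truncCscSq B t = 2 * B / sin B ^ 2 + 2 * cot B := by
  have hcont := continuous_truncCscSq (sin_pos_of_pos_of_lt_pi hB (by linarith)).ne'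
  have hshift : ∫ t in (0 : ℝ)..π, truncCscSq B t = ∫ t in -B..π - B, truncCscSq B t := by
    simpa only [zero_add, neg_add_eq_sub] using truncCscSq_periodic.intervalIntegral_add_eq 0 (-B)
  rw [hshift, ← integral_truncCscSq_neg_self hB hB', ← integral_truncCscSq_pi_sub hB hB',
    intervalIntegral.integral_add_adjacent_intervals (hcont.intervalIntegrable _ _)
      (hcont.intervalIntegrable _ _)]

end TruncCscSq

theorem exists_sin_sq_eq_one (c : ℝ) : ∃ t ∈ Icc c (c + π), sin t ^ 2 = 1 := by
  obtain ⟨n, hn, -⟩ := existsUnique_add_zsmul_mem_Ioc pi_pos (π / 2) c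
  refine ⟨_, Ioc_subset_Icc_self hn, ?_⟩
  calc sin (π / 2 + n • π) ^ 2 = sin (π / 2) ^ 2 := sin_sq_periodic.zsmul n _
    _ = 1 := by rw [sin_pi_div_two, one_pow]

theorem integral_truncCscSq_comp_lt {B x y : ℝ} {θ : ℝ → ℝ} (hB : 0 < B) (hB' : B < π / 2)
    (hθ : Continuous θ) (hxy : x < y) (hrot : θ x + π ≤ θ y) :
    ∫ t in x..y, truncCscSq B (θ t) < (y - x) / sin B ^ 2 := by
  have hsinB : 0 < sin B := sin_pos_of_pos_of_lt_pi hB (by linarith)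
  have hcosB : 0 < cos B := cos_pos_of_mem_Ioo ⟨by linarith, hB'⟩
  obtain ⟨s, hs, hsin⟩ := exists_sin_sq_eq_one (θ x)
  obtain ⟨t, ht, rfl⟩ := intermediate_value_Icc hxy.le hθ.continuousOn ⟨hs.1, hs.2.trans hrot⟩
  have hlt : sin B ^ 2 < sin (θ t) ^ 2 := by
    rw [hsin, ← sin_sq_add_cos_sq B]
    exact lt_add_of_pos_right _ (by positivity)
  calc ∫ t in x..y, truncCscSq B (θ t) < ∫ _ in x..y, 1 / sin B ^ 2 :=
        intervalIntegral.integral_lt_integral_of_continuousOn_of_le_of_exists_lt hxy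
          ((continuous_truncCscSq hsinB.ne').comp hθ).continuousOn continuousOn_const
          (fun _ _ => truncCscSq_le hsinB.ne') ⟨t, ht, truncCscSq_lt hsinB.ne' hlt⟩
    _ = (y - x) / sin B ^ 2 := by
        rw [intervalIntegral.integral_const, smul_eq_mul, mul_one_div]

theorem mul_integral_period_le_integral {h : ℝ → ℝ} {c x y : ℝ} (hper : Function.Periodic h c)
    (hcont : Continuous h) (h₀ : ∀ t, 0 ≤ h t) (hc : 0 ≤ c) {m : ℕ} (hm : m * c ≤ y - x) :
    m * ∫ t in (0 : ℝ)..c, h t ≤ ∫ t in x..y, h t := by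
  have hI (x y : ℝ) : IntervalIntegrable h volume x y := hcont.intervalIntegrable x y
  calc m * ∫ t in (0 : ℝ)..c, h t = ∫ t in x..x + m * c, h t := by
        have hturns := hper.intervalIntegral_add_zsmul_eq m x hI
        rw [hper.intervalIntegral_add_eq x 0, zero_add] at hturns
        simpa only [zsmul_eq_mul, Int.cast_natCast] using hturns.symm
    _ ≤ ∫ t in x..y, h t :=
        intervalIntegral.integral_mono_interval le_rfl
          (le_add_of_nonneg_right (by positivity)) (by linarith) (.of_forall h₀) (hI x y)

theorem IsPruferAngle.mul_cot_lt_integral {a θ : ℝ → ℝ} {ω T : ℝ} (hθ : IsPruferAngle a ω θ)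
    (hω : 0 < ω) (hT : 0 < T) (ha : ∀ᵐ x, ω ^ 2 ≤ a x) (haI : IntervalIntegrable a volume 0 T)
    {m : ℕ} (hrot : m * π ≤ θ T - θ 0) (hωT : ω * T < m * π) :
    2 * m * ω * cot (ω * T / (2 * m)) < ∫ x in (0 : ℝ)..T, (a x - ω ^ 2) := by
  have hm : 0 < (m : ℝ) := pos_of_mul_pos_left ((mul_pos hω hT).trans hωT) pi_pos.le
  set B := ω * T / (2 * m) with hBdef
  have hBm : 2 * m * B = ω * T := mul_div_cancel₀ _ (by positivity)
  have hB : 0 < B := by positivity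
  have hB' : B < π / 2 := by
    rw [hBdef, div_lt_iff₀ (by positivity)]
    linarith
  have hsinB : sin B ≠ 0 := (sin_pos_of_pos_of_lt_pi hB (by linarith)).ne'
  have hcont := continuous_truncCscSq hsinB
  have hlower : m * (2 * B / sin B ^ 2 + 2 * cot B) ≤ ∫ s in θ 0..θ T, truncCscSq B s := by
    rw [← integral_truncCscSq_period hB hB']
    exact mul_integral_period_le_integral truncCscSq_periodic hcont (fun _ => truncCscSq_nonneg)
      pi_pos.le hrot
  have hone : θ 0 + π ≤ θ T := by
    have : (1 : ℝ) ≤ m := Nat.one_le_cast.2 (Nat.cast_pos.1 hm)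
    nlinarith [pi_pos]
  have hstrict := integral_truncCscSq_comp_lt hB hB' (IsACPrimitive.continuous hθ) hT hone
  have hupper := hθ.mul_integral_le hω ha haI hT.le hcont fun _ => truncCscSq_mul_sin_sq_le_one
  have hcancel : ω * (m * (2 * B / sin B ^ 2 + 2 * cot B))
      = 2 * m * ω * cot B + ω ^ 2 * (T / sin B ^ 2) := by
    linear_combination ω / sin B ^ 2 * hBm
  rw [sub_zero] at hstrict
  linarith [mul_le_mul_of_nonneg_left hlower hω.le,
    mul_lt_mul_of_pos_left hstrict (pow_pos hω 2)]

theorem IsPruferAngle.ae_eq_sq_of_integral_le {a θ : ℝ → ℝ} {ω T : ℝ} (hθ : IsPruferAngle a ω θ)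
    (hω : 0 < ω) (hT : 0 < T) (ha : ∀ᵐ x, ω ^ 2 ≤ a x) (haI : IntervalIntegrable a volume 0 T)
    {n : ℤ} (hn : n * π = θ T - θ 0) {p : ℕ} (hp : p * π ≤ ω * T) (hp' : ω * T ≤ (p + 1) * π)
    (hint : ∫ x in (0 : ℝ)..T, (a x - ω ^ 2) ≤ 2 * (p + 1) * ω * cot (ω * T / (2 * (p + 1)))) :
    ∀ᵐ x ∂volume.restrict (Ioc 0 T), a x = ω ^ 2 := by
  rcases le_or_gt n p with hnp | hnp
  · refine hθ.ae_eq_sq_of_sub_le hω ha hT.le ?_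
    have hle : (n : ℝ) * π ≤ p * π := by gcongr; exact_mod_cast hnp
    linarith
  have hrot : ((p + 1 : ℕ) : ℝ) * π ≤ θ T - θ 0 := by
    rw [← hn]
    gcongr
    exact_mod_cast hnp
  rcases hp'.lt_or_eq with hlt | heq
  · have := hθ.mul_cot_lt_integral hω hT ha haI hrot (by exact_mod_cast hlt)
    push_cast at this
    linarith
  have harg : ω * T / (2 * (p + 1)) = π / 2 := by
    rw [heq]
    field_simp
  rw [harg, cot_eq_cos_div_sin, cos_pi_div_two, zero_div, mul_zero] at hint
  filter_upwards [ae_restrict_eq_zero_of_integral_nonpos hT.le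
    (haI.sub intervalIntegrable_const) (ha.mono fun x hx => sub_nonneg.2 hx) hint] with x hx
  exact sub_eq_zero.1 hx

theorem ae_of_ae_restrict_Ioc_of_periodic {P : ℝ → Prop} {T : ℝ} (hT : 0 < T)
    (hP : Function.Periodic P T) (h : ∀ᵐ x ∂volume.restrict (Ioc 0 T), P x) : ∀ᵐ x, P x := by
  rw [ae_restrict_iff' measurableSet_Ioc] at h
  have htranslates : ∀ᵐ x, ∀ n : ℤ, x + n • T ∈ Ioc 0 T → P (x + n • T) :=
    ae_all_iff.2 fun n =>
      (measurePreserving_add_right volume (n • T)).quasiMeasurePreserving.ae h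
  filter_upwards [htranslates] with x hx
  obtain ⟨n, hn, -⟩ := existsUnique_add_zsmul_mem_Ioc hT x 0
  rw [zero_add] at hn
  exact (hP.zsmul n x).mp (hx n hn)

theorem IsFloquetSolution.ae_eq_sq_of_integral_le {a u v : ℝ → ℝ} {ω T : ℝ}
    (haI : ∀ x y, IntervalIntegrable a volume x y) (hper : Function.Periodic a T)
    (h : IsFloquetSolution a T u v) (hω : 0 < ω) (hT : 0 < T) (ha : ∀ᵐ x, ω ^ 2 ≤ a x)
    {p : ℕ} (hp : p * π ≤ ω * T) (hp' : ω * T ≤ (p + 1) * π)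
    (hint : ∫ x in (0 : ℝ)..T, (a x - ω ^ 2) ≤ 2 * (p + 1) * ω * cot (ω * T / (2 * (p + 1)))) :
    ∀ᵐ x, a x = ω ^ 2 := by
  obtain ⟨θ, hθ, n, hn⟩ := h.exists_isPruferAngle haI hω
  exact ae_of_ae_restrict_Ioc_of_periodic hT (hper.comp (· = ω ^ 2))
    (hθ.ae_eq_sq_of_integral_le hω hT ha (haI 0 T) hn hp hp' hint)

theorem stmt12_general {T : ℝ} (hT : 0 < T) {a : ℝ → ℝ} (hper : Function.Periodic a T)
    (hint : IntervalIntegrable a volume 0 T) (p : ℕ) {k : ℝ} (hk₀ : 0 < k)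
    (hk : k ∈ Icc ((p : ℝ) ^ 2 * π ^ 2 / T ^ 2) (((p : ℝ) + 1) ^ 2 * π ^ 2 / T ^ 2))
    (hka : ∀ᵐ x, k ≤ a x)
    (hnorm : ∫ x in (0 : ℝ)..T, |a x| ≤
      k * T + 2 * ((p : ℝ) + 1) * √k * cot (√k * T / (2 * ((p : ℝ) + 1))))
    {u v : ℝ → ℝ} (hu : ∀ x, HasDerivAt u (v x) x)
    (hv : ∀ x, v x = v 0 - ∫ t in (0 : ℝ)..x, a t * u t) :
    ∃ C, ∀ x, |u x| + |v x| ≤ C := by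
  have haI := hper.intervalIntegrable₀ hT.ne' hint
  have hω : 0 < √k := sqrt_pos.2 hk₀
  have hka' : ∀ᵐ x, √k ^ 2 ≤ a x := by rwa [sq_sqrt hk₀.le]
  have hexcess : ∫ x in (0 : ℝ)..T, (a x - √k ^ 2) ≤
      2 * (p + 1) * √k * cot (√k * T / (2 * (p + 1))) := by
    have habs : ∫ x in (0 : ℝ)..T, |a x| = ∫ x in (0 : ℝ)..T, a x :=
      intervalIntegral.integral_congr_ae
        (hka.mono fun x hx _ => abs_of_nonneg (hk₀.le.trans hx))
    rw [sq_sqrt hk₀.le, intervalIntegral.integral_sub hint intervalIntegrable_const,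
      intervalIntegral.integral_const, smul_eq_mul]
    linarith
  have hp : p * π ≤ √k * T := by
    rw [← div_le_iff₀ hT]
    exact le_sqrt_of_sq_le (by simpa only [div_pow, mul_pow] using hk.1)
  have hp' : √k * T ≤ (p + 1) * π := by
    rw [← le_div_iff₀ hT]
    exact sqrt_le_iff.2 ⟨by positivity, by simpa only [div_pow, mul_pow] using hk.2⟩
  have hsol := IsHillSolution.of_integral_eq haI hu hv
  rcases hsol.bounded_or_exists_isFloquetSolution haI hT.ne' hper with hbdd | ⟨y, w, hyw⟩
  · exact hbdd
  · exact hsol.bounded_of_ae_eq_sq hω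
      (hyw.ae_eq_sq_of_integral_le haI hper hω hT hka' hp hp' hexcess)

theorem stmt12 (T : ℝ) (hT : 0 < T) (a : ℝ → ℝ) (hLT : MemLT T a)
    (p : ℕ) (hp : 1 ≤ p) (k : ℝ)
    (hk : k ∈ Set.Icc ((p : ℝ) ^ 2 * Real.pi ^ 2 / T ^ 2)
      (((p : ℝ) + 1) ^ 2 * Real.pi ^ 2 / T ^ 2))
    (hka : ∀ᵐ x : ℝ, k ≤ a x)
    (hnorm : (∫ x in (0:ℝ)..T, |a x|) ≤
      k * T + 2 * ((p : ℝ) + 1) * Real.sqrt k *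
        Real.cot (Real.sqrt k * T / (2 * ((p : ℝ) + 1)))) :
    ∀ u v : ℝ → ℝ, (∀ x : ℝ, HasDerivAt u (v x) x) →
      (∀ x : ℝ, v x = v 0 - ∫ t in (0:ℝ)..x, a t * u t) →
      ∃ C : ℝ, ∀ x : ℝ, |u x| + |v x| ≤ C := by
  have hint := (intervalIntegrable_iff_integrableOn_Icc_of_le hT.le).2 hLT.2.2
  have hk₀ : 0 < k := lt_of_lt_of_le (by positivity) hk.1
  exact fun _ _ => stmt12_general hT hLT.2.1 hint p hk₀ hk hka hnorm
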